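/- Let R be a commutative ring and a, b ∈ R. Then the resultant of the polynomials p(X) = X⁴ − 2a·X² − 8b·X + a² and q(X) = 4X³ + 4a·X + 4b (with respect to degrees 4 and 3) equals 256·(4a³ + 27b²)², which equals Δ² where Δ = −16(4a³ + 27b²). -/

import Mathlib

open Polynomial

/-- The `(m + n) × (m + n)` Sylvester matrix of two polynomials `p` and `q`, taken with
respect to the degrees `m` and `n`: the first `n` rows contain the coefficients of `p`
(from degree `m` down to degree `0`, shifted), and the last `m` rows contain the
coefficients of `q` (from degree `n` down to degree `0`, shifted). -/
def sylvesterMatrix (R : Type*) [CommRing R] (m n : ℕ) (p q : Polynomial R) :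
    Matrix (Fin (n + m)) (Fin (n + m)) R :=
  Matrix.of fun i j =>
    if (i : ℕ) < n then
      if (i : ℕ) ≤ (j : ℕ) ∧ (j : ℕ) ≤ (i : ℕ) + m then p.coeff (m - ((j : ℕ) - (i : ℕ)))
      else 0
    else
      if (i : ℕ) - n ≤ (j : ℕ) ∧ (j : ℕ) ≤ ((i : ℕ) - n) + n then
        q.coeff (n - ((j : ℕ) - ((i : ℕ) - n)))
      else 0

/-- The resultant of two polynomials `p` and `q` with respect to the degrees `m` and `n`:
the determinant of their `(m + n) × (m + n)` Sylvester matrix. -/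
def resultant (R : Type*) [CommRing R] (m n : ℕ) (p q : Polynomial R) : R :=
  (sylvesterMatrix R m n p q).det

/-! With `f = X³ + aX + b`, the two polynomials are `(f')² - 8Xf` and `4f`. Hence
`Res(p, 4f) = 4⁴ Res(p, f) = 4⁴ Res((f')², f) = 4⁴ Res(f', f)² = 4⁴ disc(f)²`,
and `disc(f) = -(4a³ + 27b²)`. -/

section Resultant

variable {R : Type*} [CommRing R]

-- Reversing both rows and columns swaps the two blocks of coefficients and makes their order
-- ascending, as in Mathlib; the same permutation on both sides costs no sign.
theorem sylvesterMatrix_eq_submatrix_transpose_sylvester (m n : ℕ) (p q : R[X]) :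
    sylvesterMatrix R m n p q =
      (sylvester p q m n).transpose.submatrix ((finCongr (add_comm n m)).trans Fin.revPerm)
        ((finCongr (add_comm n m)).trans Fin.revPerm) := by
  ext i j
  simp only [sylvesterMatrix, sylvester, Fin.addCases, Matrix.submatrix_apply,
    Matrix.transpose_apply, Matrix.of_apply, Equiv.trans_apply, finCongr_apply,
    Fin.revPerm_apply, Fin.val_rev, Fin.val_cast, Fin.val_castLT, Fin.val_subNat, Set.mem_Icc,
    eq_rec_constant, dite_eq_ite]
  grind

theorem resultant_eq_polynomial_resultant (m n : ℕ) (p q : R[X]) :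
    _root_.resultant R m n p q = p.resultant q m n := by
  rw [_root_.resultant, Polynomial.resultant, sylvesterMatrix_eq_submatrix_transpose_sylvester,
    Matrix.det_submatrix_equiv_self, Matrix.det_transpose]

theorem resultant_mul_left_of_natDegree_le {f₁ f₂ g : R[X]} {m₁ m₂ n : ℕ}
    (hf₁ : f₁.natDegree ≤ m₁) (hf₂ : f₂.natDegree ≤ m₂) (hg : g.natDegree ≤ n) :
    (f₁ * f₂).resultant g (m₁ + m₂) n = f₁.resultant g m₁ n * f₂.resultant g m₂ n := by
  obtain ⟨k₁, rfl⟩ := Nat.exists_eq_add_of_le hf₁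
  obtain ⟨k₂, rfl⟩ := Nat.exists_eq_add_of_le hf₂
  rw [add_add_add_comm, resultant_add_left_deg _ _ _ _ _ natDegree_mul_le,
    resultant_mul_left _ _ _ _ hg, resultant_add_left_deg _ _ _ _ _ le_rfl,
    resultant_add_left_deg _ _ _ _ _ le_rfl]
  ring

theorem resultant_derivative_left_sq {f : R[X]} (hf : 0 < f.degree) :
    f.derivative.resultant f (f.natDegree - 1) f.natDegree ^ 2 =
      (f.leadingCoeff * f.discr) ^ 2 := by
  rw [resultant_comm, resultant_deriv hf]
  simp only [mul_pow, pow_right_comm (-1 : R) _ 2, neg_one_sq, one_pow, one_mul]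

theorem resultant_derivative_sq_add_mul {f h : R[X]} (hf : 0 < f.degree)
    (hh : h.natDegree + f.natDegree ≤ 2 * (f.natDegree - 1)) :
    (f.derivative ^ 2 + f * h).resultant f (2 * (f.natDegree - 1)) f.natDegree =
      (f.leadingCoeff * f.discr) ^ 2 := by
  rw [resultant_add_mul_left _ _ _ _ _ hh le_rfl, sq f.derivative, two_mul,
    resultant_mul_left_of_natDegree_le (natDegree_derivative_le f) (natDegree_derivative_le f)
      le_rfl, ← sq, resultant_derivative_left_sq hf]

end Resultant

section DepressedCubic

variable {R : Type*} [CommRing R] (a b : R)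

/-- The monic cubic `X³ + aX + b` without quadratic term: the right-hand side of the short
Weierstrass equation `y² = x³ + ax + b`. -/
noncomputable def depressedCubic : R[X] :=
  X ^ 3 + C a * X + C b

theorem degree_depressedCubic [Nontrivial R] : (depressedCubic a b).degree = 3 := by
  unfold depressedCubic
  compute_degree!

theorem natDegree_depressedCubic [Nontrivial R] : (depressedCubic a b).natDegree = 3 :=
  natDegree_eq_of_degree_eq_some (degree_depressedCubic a b)

theorem monic_depressedCubic : (depressedCubic a b).Monic := by
  unfold depressedCubic
  monicity!

theorem discr_depressedCubic : (depressedCubic a b).discr = -(4 * a ^ 3 + 27 * b ^ 2) := by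
  nontriviality R
  have h₀ : (depressedCubic a b).coeff 0 = b := by simp [depressedCubic]
  have h₁ : (depressedCubic a b).coeff 1 = a := by simp [depressedCubic, coeff_X_pow]
  have h₂ : (depressedCubic a b).coeff 2 = 0 := by simp [depressedCubic, coeff_X_pow]
  have h₃ : (depressedCubic a b).coeff 3 = 1 := by simp [depressedCubic]
  rw [discr_of_degree_eq_three (degree_depressedCubic a b), h₀, h₁, h₂, h₃]
  ring

theorem derivative_depressedCubic : (depressedCubic a b).derivative = C 3 * X ^ 2 + C a := by
  simp [depressedCubic, derivative_X_pow, -derivative_X_pow_succ]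

theorem lattes_numerator_eq_derivative_sq_add_mul :
    X ^ 4 - C (2 * a) * X ^ 2 - C (8 * b) * X + C (a ^ 2) =
      (depressedCubic a b).derivative ^ 2 + depressedCubic a b * (-8 * X) := by
  rw [derivative_depressedCubic, depressedCubic]
  simp only [map_mul, map_pow, map_ofNat]
  ring

theorem lattes_denominator_eq_C_mul_depressedCubic :
    C 4 * X ^ 3 + C (4 * a) * X + C (4 * b) = C 4 * depressedCubic a b := by
  simp only [depressedCubic, map_mul]
  ring

end DepressedCubic

/-- For any commutative ring `R` and `a, b ∈ R`, the resultant of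
`p(X) = X⁴ - 2aX² - 8bX + a²` and `q(X) = 4X³ + 4aX + 4b` (with respect to degrees `4`
and `3`) equals `256 (4a³ + 27b²)² = Δ²`, where `Δ = -16(4a³ + 27b²)`. -/
theorem resultant_lattes_numerator_denominator (R : Type*) [CommRing R] (a b : R) :
    resultant R 4 3
        (X ^ 4 - C (2 * a) * X ^ 2 - C (8 * b) * X + C (a ^ 2))
        (C 4 * X ^ 3 + C (4 * a) * X + C (4 * b)) =
      256 * (4 * a ^ 3 + 27 * b ^ 2) ^ 2 ∧
    (256 : R) * (4 * a ^ 3 + 27 * b ^ 2) ^ 2 = (-16 * (4 * a ^ 3 + 27 * b ^ 2)) ^ 2 := by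
  refine ⟨?_, by ring⟩
  nontriviality R
  have hdeg := natDegree_depressedCubic a b
  have hpos : 0 < (depressedCubic a b).degree := by simp [degree_depressedCubic]
  have hX : (-8 * X : R[X]).natDegree ≤ 1 := by compute_degree
  have hres := resultant_derivative_sq_add_mul (h := -8 * X) hpos (by lia)
  rw [hdeg, (monic_depressedCubic a b).leadingCoeff, discr_depressedCubic] at hres
  rw [resultant_eq_polynomial_resultant, lattes_numerator_eq_derivative_sq_add_mul,
    lattes_denominator_eq_C_mul_depressedCubic, resultant_C_mul_right, hres]
  ring
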